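/- Sturm separation: let ψ : ℝ → ℝ be a twice continuously differentiable solution of the mode-zero Jacobi equation (B·ψ')'(s) + B(s)·(|II|²(s) − 2)·ψ(s) = 0 with initial data ψ(0) = 1/(2·K) and ψ'(0) = 0, where |II|²(s) := 2·(B''(s)/B(s) − 1). Then ψ has at most one zero in (0, ∞); that is, there do not exist s₁, s₂ with 0 < s₁ < s₂ and ψ(s₁) = ψ(s₂) = 0. -/

import Mathlib

namespace MoriCatenoid

/-- Profile function `B(s) = √(a·cosh(2s) − 1/2)` of the Mori family. -/
noncomputable def B (a s : ℝ) : ℝ := Real.sqrt (a * Real.cosh (2 * s) - 1 / 2)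

/-- Profile function `A(s) = √(a·cosh(2s) + 1/2)` of the Mori family. -/
noncomputable def A (a s : ℝ) : ℝ := Real.sqrt (a * Real.cosh (2 * s) + 1 / 2)

/-- The constant `K = √(a² − 1/4)`. -/
noncomputable def K (a : ℝ) : ℝ := Real.sqrt (a ^ 2 - 1 / 4)

/-- The angle function `φ(s) = K·∫₀ˢ dt/(A(t)²·B(t))`. -/
noncomputable def φ (a s : ℝ) : ℝ := K a * ∫ t in (0:ℝ)..s, 1 / ((A a t) ^ 2 * B a t)

/-- The mode-one Jacobi field `f_*(s) = d/ds (A(s)·cosh(φ(s)))`. -/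
noncomputable def fstar (a s : ℝ) : ℝ := deriv (fun t => A a t * Real.cosh (φ a t)) s

/-- Squared norm of the second fundamental form, `|II|²(s) = 2·(B''(s)/B(s) − 1)`. -/
noncomputable def IIsq (a s : ℝ) : ℝ := 2 * (deriv (deriv (B a)) s / B a s - 1)

/-- The mode-`k` potential `W_k(s) = |II|²(s) − 2 − k²/B(s)²`. -/
noncomputable def W (a : ℝ) (k : ℤ) (s : ℝ) : ℝ := IIsq a s - 2 - (k : ℝ) ^ 2 / (B a s) ^ 2

/-- Inverse hyperbolic cosine: `arcosh x = log (x + √(x² − 1))`. -/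
noncomputable def arcosh (x : ℝ) : ℝ := Real.log (x + Real.sqrt (x ^ 2 - 1))

/-- The axial boost field `u_*(s) = −a·sinh(2s)/B(s)`. -/
noncomputable def ustar (a s : ℝ) : ℝ := -a * Real.sinh (2 * s) / B a s

/-- The radial quadratic form of mode `k`:
`S_k(u) = ∫_{−s₀}^{s₀} (B·u'² − B·W_k·u²) − coth(r)·B(s₀)·(u(s₀)² + u(−s₀)²)`,
where `u'` is the derivative of `u` within `[−s₀, s₀]`. -/
noncomputable def Sk (a s₀ r : ℝ) (k : ℤ) (u : ℝ → ℝ) : ℝ :=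
  (∫ s in (-s₀)..s₀,
      (B a s * (derivWithin u (Set.Icc (-s₀) s₀) s) ^ 2 - B a s * W a k s * u s ^ 2))
    - Real.cosh r / Real.sinh r * B a s₀ * (u s₀ ^ 2 + u (-s₀) ^ 2)

theorem rad_pos (a : ℝ) (ha : 1 / 2 < a) (s : ℝ) : 0 < a * Real.cosh (2 * s) - 1 / 2 := by
  nlinarith [Real.one_le_cosh (2 * s)]

theorem B_pos (a : ℝ) (ha : 1 / 2 < a) (s : ℝ) : 0 < B a s :=
  Real.sqrt_pos.mpr (rad_pos a ha s)

theorem B_sq (a : ℝ) (ha : 1 / 2 < a) (s : ℝ) :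
    B a s ^ 2 = a * Real.cosh (2 * s) - 1 / 2 :=
  Real.sq_sqrt (rad_pos a ha s).le

theorem hasDerivAt_cosh_two (s : ℝ) :
    HasDerivAt (fun t : ℝ => Real.cosh (2 * t)) (2 * Real.sinh (2 * s)) s := by
  have h := ((hasDerivAt_id s).const_mul (2 : ℝ)).cosh
  simpa [mul_comm] using h

theorem hasDerivAt_sinh_two (s : ℝ) :
    HasDerivAt (fun t : ℝ => Real.sinh (2 * t)) (2 * Real.cosh (2 * s)) s := by
  have h := ((hasDerivAt_id s).const_mul (2 : ℝ)).sinh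
  simpa [mul_comm] using h

/-- The derivative of `B`. -/
noncomputable def uu (a s : ℝ) : ℝ := a * Real.sinh (2 * s) / B a s

/-- The second derivative of `B`. -/
noncomputable def vv (a s : ℝ) : ℝ := (2 * a * Real.cosh (2 * s) - uu a s ^ 2) / B a s

theorem hasDerivAt_B (a : ℝ) (ha : 1 / 2 < a) (s : ℝ) : HasDerivAt (B a) (uu a s) s := by
  have h := (((hasDerivAt_cosh_two s).const_mul a).sub_const (1 / 2)).sqrt (rad_pos a ha s).ne'
  refine h.congr_deriv ?_
  unfold uu B
  have := (B_pos a ha s).ne'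
  unfold B at this
  field_simp

theorem hasDerivAt_uu (a : ℝ) (ha : 1 / 2 < a) (s : ℝ) : HasDerivAt (uu a) (vv a s) s := by
  have hB := (B_pos a ha s).ne'
  have h := ((hasDerivAt_sinh_two s).const_mul a).div (hasDerivAt_B a ha s) hB
  refine h.congr_deriv ?_
  unfold vv uu
  field_simp

theorem IIsq_eq (a : ℝ) (ha : 1 / 2 < a) (s : ℝ) : IIsq a s = 2 * (vv a s / B a s - 1) := by
  have h1 : deriv (B a) = uu a := funext fun t => (hasDerivAt_B a ha t).deriv
  unfold IIsq
  rw [h1, (hasDerivAt_uu a ha s).deriv]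

/-- Sturm separation: if `ψ` is a `C²` solution of the mode-zero Jacobi equation
`(B·ψ')' + B·(|II|² − 2)·ψ = 0` with `ψ(0) = 1/(2K)` and `ψ'(0) = 0`, then `ψ`
has at most one zero in `(0, ∞)`. -/
theorem sturm_separation (a : ℝ) (ha : 1 / 2 < a) (ψ : ℝ → ℝ)
    (hψ : ContDiff ℝ 2 ψ)
    (hode : ∀ s : ℝ, deriv (fun t => B a t * deriv ψ t) s
        + B a s * (IIsq a s - 2) * ψ s = 0)
    (hψ0 : ψ 0 = 1 / (2 * K a)) (hψ0' : deriv ψ 0 = 0) :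
    ¬ ∃ s₁ s₂ : ℝ, 0 < s₁ ∧ s₁ < s₂ ∧ ψ s₁ = 0 ∧ ψ s₂ = 0 := by
  rintro ⟨s₁, s₂, h1, h12, hz1, hz2⟩
  have hd : ∀ s, HasDerivAt ψ (deriv ψ s) s := fun s =>
    (hψ.differentiable (by norm_num) s).hasDerivAt
  have hd2 : Differentiable ℝ (deriv ψ) :=
    ((contDiff_succ_iff_deriv (n := 1)).mp (by simpa [one_add_one_eq_two] using hψ)).2.2.differentiable
      (by norm_num)
  have hP : ∀ s, HasDerivAt (fun t => B a t * deriv ψ t)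
      (-((2 * vv a s - 4 * B a s) * ψ s)) s := by
    intro s
    have h : DifferentiableAt ℝ (fun t => B a t * deriv ψ t) s :=
      (hasDerivAt_B a ha s).differentiableAt.mul (hd2 s)
    refine h.hasDerivAt.congr_deriv ?_
    have h3 := hode s
    rw [IIsq_eq a ha s] at h3
    have hB := (B_pos a ha s).ne'
    have h4 : B a s * (2 * (vv a s / B a s - 1) - 2) = 2 * vv a s - 4 * B a s := by
      field_simp
      ring
    rw [h4] at h3
    linarith
  have hq : ∀ s, HasDerivAt (fun t => 2 * a * Real.cosh (2 * t) - uu a t ^ 2)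
      (4 * B a s * uu a s - 2 * uu a s * vv a s) s := by
    intro s
    have h := ((hasDerivAt_cosh_two s).const_mul (2 * a)).sub ((hasDerivAt_uu a ha s).pow 2)
    refine h.congr_deriv ?_
    have hB := (B_pos a ha s).ne'
    have h5 : B a s * uu a s = a * Real.sinh (2 * s) := by
      unfold uu
      field_simp
    norm_num
    linear_combination (-4) * h5
  have hqv : ∀ s, 2 * a * Real.cosh (2 * s) - uu a s ^ 2 = B a s * vv a s := by
    intro s
    have hB := (B_pos a ha s).ne'
    unfold vv
    field_simp
  let w : ℝ → ℝ := fun t => B a t * deriv ψ t * uu a t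
    - ψ t * (2 * a * Real.cosh (2 * t) - uu a t ^ 2)
  have hw : ∀ s, HasDerivAt w 0 s := by
    intro s
    refine (((hP s).mul (hasDerivAt_uu a ha s)).sub ((hd s).mul (hq s))).congr_deriv ?_
    rw [hqv s]
    ring
  have hconst : ∀ x y, w x = w y :=
    is_const_of_deriv_eq_zero (fun s => (hw s).differentiableAt) (fun s => (hw s).deriv)
  have hu : ∀ s, 0 < s → 0 < uu a s := by
    intro s hs
    exact div_pos (mul_pos (by linarith) (Real.sinh_pos_iff.mpr (by linarith))) (B_pos a ha s)
  have hg : ∀ s, 0 < s → HasDerivAt (fun t => ψ t / uu a t)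
      ((deriv ψ s * uu a s - ψ s * vv a s) / uu a s ^ 2) s := fun s hs =>
    (hd s).div (hasDerivAt_uu a ha s) (hu s hs).ne'
  obtain ⟨c, hc, hc0⟩ := exists_hasDerivAt_eq_zero (f := fun t => ψ t / uu a t) h12
    (fun x hx => (hg x (lt_of_lt_of_le h1 hx.1)).continuousAt.continuousWithinAt)
    (by simp [hz1, hz2]) (fun x hx => hg x (h1.trans hx.1))
  have huc := (hu c (h1.trans hc.1)).ne'
  have hc1 : deriv ψ c * uu a c - ψ c * vv a c = 0 := by
    rcases div_eq_zero_iff.mp hc0 with h | h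
    · exact h
    · exact absurd h (pow_ne_zero 2 huc)
  have hwc : w c = 0 := by
    simp only [w]
    rw [hqv c]
    linear_combination B a c * hc1
  have hw0 : w 0 = -(ψ 0 * (2 * a)) := by
    simp [w, uu]
  have hK : 0 < K a := Real.sqrt_pos.mpr (by nlinarith)
  have hp : 0 < ψ 0 := by rw [hψ0]; positivity
  have := hconst 0 c
  rw [hwc, hw0] at this
  have : 0 < ψ 0 * (2 * a) := by positivity
  linarith

end MoriCatenoid
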